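/- For all cut-free named GS4 derivations P with conclusion ⊢Γ, the branch set of the branch-labeled axiom graph is exactly that of the conclusion: Br(⟨⟨P⟩⟩) = Br(Γ). -/

import Mathlib

open scoped Classical

noncomputable section

namespace GS4

/-- Named classical propositional formulas over atoms `α`, with names in `ℕ`. -/
inductive NForm (α : Type) : Type
  | atom : ℕ → α → NForm α
  | or   : NForm α → NForm α → NForm α
  | and  : NForm α → NForm α → NForm α

variable {α : Type}

/-- Name-preserving De Morgan negation, w.r.t. an involution `bar` on atoms. -/
def negF (bar : α → α) : NForm α → NForm α
  | .atom x a => .atom x (bar a)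
  | .or A B => .and (negF bar A) (negF bar B)
  | .and A B => .or (negF bar A) (negF bar B)

/-- The set of names occurring in a named formula. -/
def NForm.names : NForm α → Set ℕ
  | .atom x _ => {x}
  | .or A B => A.names ∪ B.names
  | .and A B => A.names ∪ B.names

/-- A named formula is sharing-free if every name occurs at most once in it. -/
def NForm.sharingFree : NForm α → Prop
  | .atom _ _ => True
  | .or A B => A.sharingFree ∧ B.sharingFree ∧ Disjoint A.names B.names
  | .and A B => A.sharingFree ∧ B.sharingFree ∧ Disjoint A.names B.names

def NForm.isAtom : NForm α → Prop
  | .atom _ _ => True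
  | _ => False

/-- Anonymous formulas (shapes): `A ≡ B` iff their shapes coincide. -/
inductive Shape (α : Type) : Type
  | atom : α → Shape α
  | or   : Shape α → Shape α → Shape α
  | and  : Shape α → Shape α → Shape α

def NForm.shape : NForm α → Shape α
  | .atom _ a => .atom a
  | .or A B => .or A.shape B.shape
  | .and A B => .and A.shape B.shape

/-- `HasAtom A x a`: the atomic formula `x:a` occurs in `A`. -/
def HasAtom : NForm α → ℕ → α → Prop
  | .atom y b, x, a => y = x ∧ b = a
  | .or A B, x, a => HasAtom A x a ∨ HasAtom B x a
  | .and A B, x, a => HasAtom A x a ∨ HasAtom B x a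

/-- Names of a finite set of named formulas. -/
def snames (Γ : Finset (NForm α)) : Set ℕ := ⋃ A ∈ Γ, A.names

/-- A finite set of named formulas is sharing-free if all its elements are
sharing-free with pairwise disjoint name sets. -/
def SFSet (Γ : Finset (NForm α)) : Prop :=
  (∀ A ∈ Γ, A.sharingFree) ∧
  ∀ A ∈ Γ, ∀ B ∈ Γ, A ≠ B → Disjoint A.names B.names

/-- `x:a` occurs in some formula of `Γ` (i.e. `Γ[x] = a` for sharing-free `Γ`). -/
def HasAtomS (Γ : Finset (NForm α)) (x : ℕ) (a : α) : Prop :=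
  ∃ A ∈ Γ, HasAtom A x a

/-- Branch sets of named formulas. -/
def BrF : NForm α → Set (Set ℕ)
  | .atom x _ => {{x}}
  | .or A B => {X | ∃ Y ∈ BrF A, ∃ Z ∈ BrF B, X = Y ∪ Z}
  | .and A B => BrF A ∪ BrF B

/-- Branch sets of sequents (finite sharing-free sets of named formulas). -/
def BrS (Γ : Finset (NForm α)) : Set (Set ℕ) :=
  {X | X ⊆ snames Γ ∧ ∀ A ∈ Γ, X ∩ A.names ∈ BrF A}

/-! ## Branch-labeled name graphs -/

/-- A branch-labeled name graph: vertices and a relation between unordered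
pairs of vertices and branch labels. -/
structure BLGraph : Type where
  verts : Set ℕ
  rel : Sym2 ℕ → Set ℕ → Prop

/-- Well-formedness of a bl-graph: related pairs consist of distinct vertices,
labels are sets of vertices, and each edge is included in its labels. -/
def BLGraph.IsBL (G : BLGraph) : Prop :=
  ∀ e X, G.rel e X → ¬ e.IsDiag ∧ X ⊆ G.verts ∧ ∀ v ∈ e, v ∈ X

def BLGraph.Edges (G : BLGraph) : Set (Sym2 ℕ) := {e | ∃ X, G.rel e X}

def BLGraph.Br (G : BLGraph) : Set (Set ℕ) := {X | ∃ e, G.rel e X}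

def BLGraph.union (G H : BLGraph) : BLGraph :=
  ⟨G.verts ∪ H.verts, fun e X => G.rel e X ∨ H.rel e X⟩

/-- Restriction `G↾_S` of a bl-graph. -/
def BLGraph.restrict (G : BLGraph) (S : Set ℕ) : BLGraph :=
  ⟨G.verts ∩ S, fun e X => G.rel e X ∧ X ⊆ S⟩

/-- The interface-relativized edge-branch relation `e ⊰^I_G X`. -/
def BLGraph.relI (G : BLGraph) (I : Set ℕ) (e : Sym2 ℕ) (X : Set ℕ) : Prop :=
  ∃ Y, G.rel e Y ∧ X = Y \ I

/-- `z 0, …, z (n-1)` is an `X`-labeled alternating path between `G` and `H`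
through the interface `I`. -/
def AltPath (G H : BLGraph) (I X : Set ℕ) (n : ℕ) (z : ℕ → ℕ) : Prop :=
  1 < n ∧
  (∀ i < n, ∀ j < n, z i = z j → i = j) ∧
  (∀ i, 0 < i → i + 1 < n → z i ∈ I) ∧
  ((∀ i, i + 1 < n →
      (Even i → G.relI I s(z i, z (i + 1)) X) ∧ (¬ Even i → H.relI I s(z i, z (i + 1)) X)) ∨
   (∀ i, i + 1 < n →
      (Even i → H.relI I s(z i, z (i + 1)) X) ∧ (¬ Even i → G.relI I s(z i, z (i + 1)) X)))

/-- Composition of bl-graphs over an interface `I`. -/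
def BLGraph.comp (G H : BLGraph) (I : Set ℕ) : BLGraph :=
  ⟨(G.verts ∪ H.verts) \ I,
   fun e X => ∃ n z, AltPath G H I X n z ∧ z 0 ∉ I ∧ z (n - 1) ∉ I ∧
     e = s(z 0, z (n - 1))⟩

/-- The weakening operator on bl-graphs: add vertices `V` and extend every
branch label by a member of `Brs`. -/
def blwk (V : Set ℕ) (Brs : Set (Set ℕ)) (G : BLGraph) : BLGraph :=
  ⟨G.verts ∪ V, fun e X => ∃ Y Z, G.rel e Y ∧ Z ∈ Brs ∧ X = Y ∪ Z⟩

/-- The bl-identity graph `id_{A,C}` on a pair of dual formulas. -/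
def blid : NForm α → NForm α → BLGraph
  | .atom x _, .atom y _ => ⟨{x, y}, fun e X => e = s(x, y) ∧ X = {x, y}⟩
  | .or A1 A2, .and C1 C2 =>
      (blwk A2.names (BrF A2) (blid A1 C1)).union (blwk A1.names (BrF A1) (blid A2 C2))
  | .and A1 A2, .or C1 C2 =>
      (blwk C2.names (BrF C2) (blid A1 C1)).union (blwk C1.names (BrF C1) (blid A2 C2))
  | _, _ => ⟨∅, fun _ _ => False⟩

/-! ## Simple name graphs -/

/-- A simple name graph. -/
structure NGraph : Type where
  verts : Set ℕ
  edges : Set (Sym2 ℕ)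

/-- Subgraph relation `H ⊑ G`. -/
def NGraph.Sub (H G : NGraph) : Prop := H.verts ⊆ G.verts ∧ H.edges ⊆ G.edges

def NGraph.union (G H : NGraph) : NGraph := ⟨G.verts ∪ H.verts, G.edges ∪ H.edges⟩

/-- Induced subgraph `G↾_S`. -/
def NGraph.restrict (G : NGraph) (S : Set ℕ) : NGraph :=
  ⟨G.verts ∩ S, {e ∈ G.edges | ∀ v ∈ e, v ∈ S}⟩

/-- Alternating paths between simple name graphs through an interface. -/
def NAltPath (G H : NGraph) (I : Set ℕ) (n : ℕ) (z : ℕ → ℕ) : Prop :=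
  0 < n ∧
  (∀ i < n, ∀ j < n, z i = z j → i = j) ∧
  (∀ i, 0 < i → i + 1 < n → z i ∈ I) ∧
  ((∀ i, i + 1 < n →
      (Even i → s(z i, z (i + 1)) ∈ G.edges) ∧ (¬ Even i → s(z i, z (i + 1)) ∈ H.edges)) ∨
   (∀ i, i + 1 < n →
      (Even i → s(z i, z (i + 1)) ∈ H.edges) ∧ (¬ Even i → s(z i, z (i + 1)) ∈ G.edges)))

/-- Composition of simple name graphs over an interface. -/
def NGraph.comp (G H : NGraph) (I : Set ℕ) : NGraph :=
  ⟨(G.verts ∪ H.verts) \ I,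
   {e | ∃ x y, x ≠ y ∧ x ∈ (G.verts ∪ H.verts) \ I ∧ y ∈ (G.verts ∪ H.verts) \ I ∧
        e = s(x, y) ∧ ∃ n z, NAltPath G H I n z ∧ z 0 = x ∧ z (n - 1) = y}⟩

/-- The identity graph `Id_{A,C}` on a pair of dual formulas. -/
def idg : NForm α → NForm α → NGraph
  | .atom x _, .atom y _ => ⟨{x, y}, {s(x, y)}⟩
  | .or A1 A2, .and C1 C2 => (idg A1 C1).union (idg A2 C2)
  | .and A1 A2, .or C1 C2 => (idg A1 C1).union (idg A2 C2)
  | _, _ => ⟨∅, ∅⟩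

/-- The edgeless (weakening) graph on the names of `Γ`. -/
def wkg (Γ : Finset (NForm α)) : NGraph := ⟨snames Γ, ∅⟩

/-! ## Named GS4 derivations -/

/-- Named GS4 derivation trees. -/
inductive Deriv (α : Type) : Type
  | ax (Γ : Finset (NForm α)) (A C : NForm α)
  | cut (A : NForm α) (P Q : Deriv α)
  | sup (P Q : Deriv α)
  | orI (A B : NForm α) (P : Deriv α)
  | andI (A B : NForm α) (P Q : Deriv α)

/-- Conclusion of a derivation tree. -/
def concl : Deriv α → Finset (NForm α)
  | .ax Γ A C => insert A (insert C Γ)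
  | .cut A P _ => (concl P).erase A
  | .sup P _ => concl P
  | .orI A B P => insert (NForm.or A B) (((concl P).erase A).erase B)
  | .andI A B P _ => insert (NForm.and A B) ((concl P).erase A)

/-- Well-formedness of derivation trees w.r.t. the atom involution `bar`:
each rule is applied correctly to sharing-free named sequents. -/
def WF (bar : α → α) : Deriv α → Prop
  | .ax Γ A C =>
      A.shape = (negF bar C).shape ∧
      A.sharingFree ∧ C.sharingFree ∧ SFSet Γ ∧
      Disjoint A.names C.names ∧
      Disjoint A.names (snames Γ) ∧ Disjoint C.names (snames Γ)
  | .cut A P Q =>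
      WF bar P ∧ WF bar Q ∧
      ∃ Γ : Finset (NForm α), A ∉ Γ ∧ negF bar A ∉ Γ ∧
        concl P = insert A Γ ∧ concl Q = insert (negF bar A) Γ ∧
        A.sharingFree ∧ SFSet Γ ∧ Disjoint A.names (snames Γ)
  | .sup P Q => WF bar P ∧ WF bar Q ∧ concl P = concl Q
  | .orI A B P =>
      WF bar P ∧
      ∃ Γ : Finset (NForm α), A ∉ Γ ∧ B ∉ Γ ∧ A ≠ B ∧
        concl P = insert A (insert B Γ) ∧
        A.sharingFree ∧ B.sharingFree ∧ SFSet Γ ∧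
        Disjoint A.names B.names ∧
        Disjoint A.names (snames Γ) ∧ Disjoint B.names (snames Γ)
  | .andI A B P Q =>
      WF bar P ∧ WF bar Q ∧
      ∃ Γ : Finset (NForm α), A ∉ Γ ∧ B ∉ Γ ∧
        concl P = insert A Γ ∧ concl Q = insert B Γ ∧
        A.sharingFree ∧ B.sharingFree ∧ SFSet Γ ∧
        Disjoint A.names B.names ∧
        Disjoint A.names (snames Γ) ∧ Disjoint B.names (snames Γ)

/-- A derivation is cut-free if it contains no cut rule. -/
def CutFree : Deriv α → Prop
  | .ax _ _ _ => True
  | .cut _ _ _ => False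
  | .sup P Q => CutFree P ∧ CutFree Q
  | .orI _ _ P => CutFree P
  | .andI _ _ P Q => CutFree P ∧ CutFree Q

/-- The branch-labeled axiom graph `⟨⟨P⟩⟩` of a derivation. -/
def blaxg : Deriv α → BLGraph
  | .ax Γ A C => blwk (snames Γ) (BrS Γ) (blid A C)
  | .cut A P Q => BLGraph.comp (blaxg P) (blaxg Q) A.names
  | .sup P Q => (blaxg P).union (blaxg Q)
  | .orI _ _ P => blaxg P
  | .andI _ _ P Q => (blaxg P).union (blaxg Q)

/-- The (simple) axiom graph `⟦P⟧` of a derivation. -/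
def axg : Deriv α → NGraph
  | .ax Γ A C => (wkg Γ).union (idg A C)
  | .cut A P Q => NGraph.comp (axg P) (axg Q) A.names
  | .sup P Q => (axg P).union (axg Q)
  | .orI _ _ P => axg P
  | .andI _ _ P Q => (axg P).union (axg Q)

/-! ## Inversion and isolation -/

/-- Inversion of a disjunction `D ∨ E` in the conclusion. -/
def inv (D E : NForm α) : Deriv α → Deriv α
  | .ax Γ A C =>
      if A = NForm.or D E then
        match C with
        | .and C1 C2 =>
            .andI C1 C2 (.ax (insert E Γ) D C1) (.ax (insert D Γ) E C2)
        | _ => .ax Γ A C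
      else if C = NForm.or D E then
        match A with
        | .and A1 A2 =>
            .andI A1 A2 (.ax (insert E Γ) A1 D) (.ax (insert D Γ) A2 E)
        | _ => .ax Γ A C
      else
        .ax (insert D (insert E (Γ.erase (NForm.or D E)))) A C
  | .cut A P Q => .cut A (inv D E P) (inv D E Q)
  | .sup P Q => .sup (inv D E P) (inv D E Q)
  | .orI A B P => if A = D ∧ B = E then P else .orI A B (inv D E P)
  | .andI A B P Q => .andI A B (inv D E P) (inv D E Q)

/-- Left inversion of a conjunction `D ∧ E` in the conclusion. -/
def invl (D E : NForm α) : Deriv α → Deriv α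
  | .ax Γ A C =>
      if A = NForm.and D E then
        match C with
        | .or C1 C2 => .orI C1 C2 (.ax (insert C2 Γ) D C1)
        | _ => .ax Γ A C
      else if C = NForm.and D E then
        match A with
        | .or A1 A2 => .orI A1 A2 (.ax (insert A2 Γ) A1 D)
        | _ => .ax Γ A C
      else
        .ax (insert D (Γ.erase (NForm.and D E))) A C
  | .cut A P Q => .cut A (invl D E P) (invl D E Q)
  | .sup P Q => .sup (invl D E P) (invl D E Q)
  | .orI A B P => .orI A B (invl D E P)
  | .andI A B P Q => if A = D ∧ B = E then P else .andI A B (invl D E P) (invl D E Q)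

/-- Right inversion of a conjunction `D ∧ E` in the conclusion. -/
def invr (D E : NForm α) : Deriv α → Deriv α
  | .ax Γ A C =>
      if A = NForm.and D E then
        match C with
        | .or C1 C2 => .orI C1 C2 (.ax (insert C1 Γ) E C2)
        | _ => .ax Γ A C
      else if C = NForm.and D E then
        match A with
        | .or A1 A2 => .orI A1 A2 (.ax (insert A1 Γ) A2 E)
        | _ => .ax Γ A C
      else
        .ax (insert E (Γ.erase (NForm.and D E))) A C
  | .cut A P Q => .cut A (invr D E P) (invr D E Q)
  | .sup P Q => .sup (invr D E P) (invr D E Q)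
  | .orI A B P => .orI A B (invr D E P)
  | .andI A B P Q => if A = D ∧ B = E then Q else .andI A B (invr D E P) (invr D E Q)

/-- Isolation of a non-atomic formula in the conclusion. -/
def isl : NForm α → Deriv α → Deriv α
  | .or A B, P => .orI A B (inv A B P)
  | .and A B, P => .andI A B (invl A B P) (invr A B P)
  | .atom _ _, P => P

/-- Totality of a bl-graph w.r.t. a sharing-free named sequent. -/
def Total (bar : α → α) (G : BLGraph) (Γ : Finset (NForm α)) : Prop :=
  G.verts = snames Γ ∧
  G.Br = BrS Γ ∧
  ∀ x y : ℕ, s(x, y) ∈ G.Edges →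
    ∀ a b : α, HasAtomS Γ x a → HasAtomS Γ y b → a = bar b

end GS4

/-!
Writing `S ⊻ T = {X ∪ Y | X ∈ S, Y ∈ T}`, disjointness of names turns the branch set of a sequent
into the `⊻`-product of the branch sets of its formulas. As `⊻` is commutative, associative and
distributes over `∪`, the conjunction rule splits the branches of its conclusion between its two
premises and the disjunction rule preserves them. The same laws show by induction that the branches
of `id_{A,C}` are exactly `BrF A ⊻ BrF C`, which settles the axioms.
-/

namespace GS4

open scoped SetFamily

variable {α : Type}

theorem BrF_or (A B : NForm α) : BrF (.or A B) = BrF A ⊻ BrF B := by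
  ext X
  simp only [BrF, Set.mem_ofPred_eq, Set.mem_sups, Set.sup_eq_union, eq_comm]

theorem BrF_and (A B : NForm α) : BrF (.and A B) = BrF A ∪ BrF B := rfl

theorem subset_names_of_mem_BrF {A : NForm α} {X : Set ℕ} (hX : X ∈ BrF A) : X ⊆ A.names := by
  induction A generalizing X with
  | atom x a => exact subset_of_eq hX
  | or A B ihA ihB =>
    obtain ⟨Y, hY, Z, hZ, rfl⟩ := hX
    exact Set.union_subset_union (ihA hY) (ihB hZ)
  | and A B ihA ihB =>
    exact hX.elim (fun hX => (ihA hX).trans Set.subset_union_left)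
      (fun hX => (ihB hX).trans Set.subset_union_right)

section Sequents

variable {A B : NForm α} {Γ : Finset (NForm α)}

theorem names_subset_snames (hA : A ∈ Γ) : A.names ⊆ snames Γ :=
  Set.subset_biUnion_of_mem (u := NForm.names) hA

theorem snames_insert (A : NForm α) (Γ : Finset (NForm α)) :
    snames (insert A Γ) = A.names ∪ snames Γ :=
  Finset.set_biUnion_insert A Γ NForm.names

theorem BrS_insert (h : Disjoint A.names (snames Γ)) : BrS (insert A Γ) = BrF A ⊻ BrS Γ := by
  ext X
  simp only [BrS, snames_insert, Finset.forall_mem_insert, Set.mem_ofPred_eq, Set.mem_sups,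
    Set.sup_eq_union]
  constructor
  · rintro ⟨hX, hXA, hXΓ⟩
    refine ⟨X ∩ A.names, hXA, X ∩ snames Γ, ⟨Set.inter_subset_right, fun B hB => ?_⟩, ?_⟩
    · rw [Set.inter_assoc, Set.inter_eq_self_of_subset_right (names_subset_snames hB)]
      exact hXΓ B hB
    · rw [← Set.inter_union_distrib_left, Set.inter_eq_self_of_subset_left hX]
  · rintro ⟨Y, hY, Z, ⟨hZΓ, hZ⟩, rfl⟩
    have hYA : Y ⊆ A.names := subset_names_of_mem_BrF hY
    have inter_names_A : (Y ∪ Z) ∩ A.names = Y := by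
      rw [Set.union_inter_distrib_right, Set.inter_eq_self_of_subset_left hYA,
        (h.symm.mono_left hZΓ).inter_eq, Set.union_empty]
    have inter_names_of_mem {B : NForm α} (hB : B ∈ Γ) : (Y ∪ Z) ∩ B.names = Z ∩ B.names := by
      rw [Set.union_inter_distrib_right, (h.mono hYA (names_subset_snames hB)).inter_eq,
        Set.empty_union]
    exact ⟨Set.union_subset_union hYA hZΓ, by rwa [inter_names_A],
      fun B hB => by rw [inter_names_of_mem hB]; exact hZ B hB⟩

theorem BrS_insert_insert (hAB : Disjoint A.names B.names) (hA : Disjoint A.names (snames Γ))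
    (hB : Disjoint B.names (snames Γ)) :
    BrS (insert A (insert B Γ)) = BrF A ⊻ BrF B ⊻ BrS Γ := by
  have hABΓ : Disjoint A.names (snames (insert B Γ)) := by
    rw [snames_insert]
    exact hAB.union_right hA
  rw [BrS_insert hABΓ, BrS_insert hB, Set.sups_assoc]

theorem BrS_insert_or (hAB : Disjoint A.names B.names) (hA : Disjoint A.names (snames Γ))
    (hB : Disjoint B.names (snames Γ)) :
    BrS (insert (.or A B) Γ) = BrS (insert A (insert B Γ)) := by
  have hor : Disjoint (NForm.or A B).names (snames Γ) := hA.union_left hB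
  rw [BrS_insert hor, BrF_or, BrS_insert_insert hAB hA hB]

theorem BrS_insert_and (hA : Disjoint A.names (snames Γ)) (hB : Disjoint B.names (snames Γ)) :
    BrS (insert (.and A B) Γ) = BrS (insert A Γ) ∪ BrS (insert B Γ) := by
  have hand : Disjoint (NForm.and A B).names (snames Γ) := hA.union_left hB
  rw [BrS_insert hand, BrF_and, Set.sups_union_left, BrS_insert hA, BrS_insert hB]

end Sequents

theorem BLGraph.Br_union (G H : BLGraph) : (G.union H).Br = G.Br ∪ H.Br := by
  ext X
  exact exists_or

theorem Br_blwk (V : Set ℕ) (S : Set (Set ℕ)) (G : BLGraph) : (blwk V S G).Br = G.Br ⊻ S := by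
  ext X
  constructor
  · rintro ⟨e, Y, Z, hY, hZ, rfl⟩
    exact ⟨Y, ⟨e, hY⟩, Z, hZ, rfl⟩
  · rintro ⟨Y, ⟨e, hY⟩, Z, hZ, rfl⟩
    exact ⟨e, Y, Z, hY, hZ, rfl⟩

theorem Br_blid {bar : α → α} {A C : NForm α} (h : A.shape = (negF bar C).shape) :
    (blid A C).Br = BrF A ⊻ BrF C := by
  induction A generalizing C with
  | atom x a =>
    rcases C with ⟨y, c⟩ | _ | _ <;> simp only [negF, NForm.shape, reduceCtorEq] at h
    ext X
    simp [blid, BLGraph.Br, BrF, Set.pair_comm]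
  | or A B ihA ihB =>
    rcases C with _ | _ | ⟨C, D⟩ <;>
      simp only [negF, NForm.shape, reduceCtorEq, Shape.or.injEq] at h
    calc (blid (.or A B) (.and C D)).Br
        = BrF A ⊻ BrF C ⊻ BrF B ∪ BrF B ⊻ BrF D ⊻ BrF A := by
          rw [blid, BLGraph.Br_union, Br_blwk, Br_blwk, ihA h.1, ihB h.2]
      _ = BrF A ⊻ BrF B ⊻ BrF C ∪ BrF A ⊻ BrF B ⊻ BrF D := by
          rw [Set.sups_right_comm (BrF A), Set.sups_right_comm (BrF B), Set.sups_comm (BrF B)]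
      _ = BrF (.or A B) ⊻ BrF (.and C D) := by rw [BrF_or, BrF_and, Set.sups_union_right]
  | and A B ihA ihB =>
    rcases C with _ | ⟨C, D⟩ | _ <;>
      simp only [negF, NForm.shape, reduceCtorEq, Shape.and.injEq] at h
    calc (blid (.and A B) (.or C D)).Br
        = BrF A ⊻ BrF C ⊻ BrF D ∪ BrF B ⊻ BrF D ⊻ BrF C := by
          rw [blid, BLGraph.Br_union, Br_blwk, Br_blwk, ihA h.1, ihB h.2]
      _ = BrF A ⊻ (BrF C ⊻ BrF D) ∪ BrF B ⊻ (BrF C ⊻ BrF D) := by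
          rw [Set.sups_right_comm (BrF B), Set.sups_assoc, Set.sups_assoc]
      _ = BrF (.and A B) ⊻ BrF (.or C D) := by rw [BrF_or, BrF_and, Set.sups_union_left]

theorem blaxg_cutfree_branches_general {bar : α → α} {P : Deriv α} (hP : WF bar P)
    (hcf : CutFree P) : (blaxg P).Br = BrS (concl P) := by
  induction P with
  | ax Γ A C =>
    obtain ⟨hshape, -, -, -, hAC, hA, hC⟩ := hP
    rw [blaxg, concl, Br_blwk, Br_blid hshape, BrS_insert_insert hAC hA hC]
  | cut => exact hcf.elim
  | sup P Q ihP ihQ =>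
    obtain ⟨hP, hQ, hPQ⟩ := hP
    rw [blaxg, concl, BLGraph.Br_union, ihP hP hcf.1, ihQ hQ hcf.2, ← hPQ, Set.union_self]
  | orI A B P ih =>
    obtain ⟨hP, Γ, hAΓ, hBΓ, hne, hconcl, -, -, -, hAB, hA, hB⟩ := hP
    have hA_notMem : A ∉ insert B Γ := by simp [hne, hAΓ]
    rw [blaxg, concl, ih hP hcf, hconcl, Finset.erase_insert hA_notMem,
      Finset.erase_insert hBΓ, BrS_insert_or hAB hA hB]
  | andI A B P Q ihP ihQ =>
    obtain ⟨hP, hQ, Γ, hAΓ, -, hconclP, hconclQ, -, -, -, -, hA, hB⟩ := hP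
    rw [blaxg, concl, BLGraph.Br_union, ihP hP hcf.1, ihQ hQ hcf.2, hconclP, hconclQ,
      Finset.erase_insert hAΓ, BrS_insert_and hA hB]

end GS4

/-- for cut-free derivations, the branch set of the
branch-labeled axiom graph is exactly that of the conclusion. -/
theorem GS4.blaxg_cutfree_branches {α : Type} (bar : α → α)
    (hbar : Function.Involutive bar) (hfix : ∀ a, bar a ≠ a)
    (P : GS4.Deriv α) (hP : GS4.WF bar P) (hcf : GS4.CutFree P) :
    (GS4.blaxg P).Br = GS4.BrS (GS4.concl P) :=
  GS4.blaxg_cutfree_branches_general hP hcf
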